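/- Let r > 3 and let χ be a strong Gallai-Schur r-coloring of [1, m] that is maximal, i.e., no strong Gallai-Schur r-coloring of [1, m'] exists for any m' > m. Then exactly one of the following holds. (a) m ≡ 4 (mod 5); the set of x ∈ [1,m] with x ≡ 1 or 4 (mod 5) is a single color class of χ; the set of x ∈ [1,m] with x ≡ 2 or 3 (mod 5) is a single color class of χ; every multiple of 5 in [1,m] receives one of the remaining r−2 colors, and the induced coloring x ↦ χ(5x) of [1, (m−4)/5] by these r−2 colors is a strong Gallai-Schur (r−2)-coloring. (b) m is odd; the set of odd numbers in [1,m] is a single color class of χ; every even number in [1,m] receives one of the remaining r−1 colors, and the induced coloring x ↦ χ(2x) of [1, (m−1)/2] by these r−1 colors is a strong Gallai-Schur (r−1)-coloring. -/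

import Mathlib

/-!
The colors of `1`, `2`, … are nearly forced. If the odd numbers up to an even `m` form the class of
`1` and `m + 1` has another color, then avoiding rainbow sums `x + (m + 1 - x)` forces every even
number to have the color of `m + 1`; since `2 + 2 = 4` this is possible only for `m = 2`. From then
on all residues modulo `5` are forced: each nonzero residue is a side `±1` plus a diagonal `±2`,
hence has one of their two colors, while the residues that are a sum of two sides (of two
diagonals) are exactly those that are not sides (not diagonals). So either the odd numbers or the
two pairs `±1`, `±2` modulo `5` are color classes.

Passing to the multiples of `2` or of `5` removes one or two colors, which bounds `m + 1` by
`5 ^ (r / 2) * 2 ^ (r % 2)`. The bound is attained by lifting along multiplication by `5`, and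
equality forces `m + 1` to be divisible by `2` or `5`, respectively.
-/

/-- A strong Gallai–Schur coloring of the interval `[1, m]` with color set `C`:
`χ` maps `[1, m]` into `C`, is surjective onto `C`, admits no monochromatic
solution of `a + b = c` (with `a = b` allowed), and admits no rainbow solution
of `a + b = c`. -/
def StrongGS (m : ℕ) (C : Finset ℕ) (χ : ℕ → ℕ) : Prop :=
  (∀ x ∈ Finset.Icc 1 m, χ x ∈ C) ∧
  (∀ i ∈ C, ∃ x ∈ Finset.Icc 1 m, χ x = i) ∧
  (∀ a ∈ Finset.Icc 1 m, ∀ b ∈ Finset.Icc 1 m, ∀ c ∈ Finset.Icc 1 m,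
      a + b = c → ¬(χ a = χ b ∧ χ b = χ c)) ∧
  (∀ a ∈ Finset.Icc 1 m, ∀ b ∈ Finset.Icc 1 m, ∀ c ∈ Finset.Icc 1 m,
      a + b = c → ¬(χ a ≠ χ b ∧ χ a ≠ χ c ∧ χ b ≠ χ c))

section Coloring

variable {α : Type*} {m : ℕ} {χ : ℕ → α} {c c₁ c₂ : α}

/-- The local condition on a strong Gallai–Schur coloring, with no reference to a palette: every
solution of `a + b = c` in `[1, m]` receives exactly two colors. -/
structure IsGallaiSchurOn (m : ℕ) (χ : ℕ → α) : Prop where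
  not_monochromatic ⦃a b : ℕ⦄ : 1 ≤ a → 1 ≤ b → a + b ≤ m → ¬(χ a = χ b ∧ χ b = χ (a + b))
  not_rainbow ⦃a b : ℕ⦄ : 1 ≤ a → 1 ≤ b → a + b ≤ m →
    ¬(χ a ≠ χ b ∧ χ a ≠ χ (a + b) ∧ χ b ≠ χ (a + b))

/-- Case (b) of the structure theorem: the odd numbers of `[1, m]` are the color class of `c`. -/
def OddsFormClass (m : ℕ) (χ : ℕ → α) (c : α) : Prop :=
  ∀ x ∈ Finset.Icc 1 m, (χ x = c ↔ Odd x)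

/-- Case (a) of the structure theorem: the residues `±1` and `±2` modulo `5` are the color classes
of `c₁` and `c₂` in `[1, m]`. As differences in `ZMod 5` these residues are the sides and the
diagonals of a pentagon. -/
structure PentagonalClasses (m : ℕ) (χ : ℕ → α) (c₁ c₂ : α) : Prop where
  ne : c₁ ≠ c₂
  side_iff : ∀ x ∈ Finset.Icc 1 m, (χ x = c₁ ↔ x % 5 = 1 ∨ x % 5 = 4)
  diagonal_iff : ∀ x ∈ Finset.Icc 1 m, (χ x = c₂ ↔ x % 5 = 2 ∨ x % 5 = 3)

namespace IsGallaiSchurOn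

theorem mono {n : ℕ} (h : IsGallaiSchurOn n χ) (hmn : m ≤ n) : IsGallaiSchurOn m χ where
  not_monochromatic _ _ ha hb hab := h.not_monochromatic ha hb (hab.trans hmn)
  not_rainbow _ _ ha hb hab := h.not_rainbow ha hb (hab.trans hmn)

theorem comp_mul (h : IsGallaiSchurOn m χ) {d : ℕ} (hd : 0 < d) :
    IsGallaiSchurOn (m / d) (fun x => χ (d * x)) where
  not_monochromatic a b ha hb hab := by
    rw [mul_add]
    exact h.not_monochromatic (Nat.mul_pos hd ha) (Nat.mul_pos hd hb)
      (by rw [← mul_add, mul_comm]; exact Nat.mul_le_of_le_div d _ m hab)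
  not_rainbow a b ha hb hab := by
    rw [mul_add]
    exact h.not_rainbow (Nat.mul_pos hd ha) (Nat.mul_pos hd hb)
      (by rw [← mul_add, mul_comm]; exact Nat.mul_le_of_le_div d _ m hab)

theorem ne_of_add_eq (h : IsGallaiSchurOn m χ) {a b n : ℕ} (ha : 1 ≤ a) (hb : 1 ≤ b)
    (hab : a + b = n) (hn : n ≤ m) (hac : χ a = c) (hbc : χ b = c) : χ n ≠ c := by
  subst hab
  exact fun hc => h.not_monochromatic ha hb hn ⟨hac.trans hbc.symm, hbc.trans hc.symm⟩

theorem eq_or_eq_of_add_eq (h : IsGallaiSchurOn m χ) {a b n : ℕ} (ha : 1 ≤ a) (hb : 1 ≤ b)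
    (hab : a + b = n) (hn : n ≤ m) (hne : χ a ≠ χ b) : χ n = χ a ∨ χ n = χ b := by
  subst hab
  have := h.not_rainbow ha hb hn
  tauto

end IsGallaiSchurOn

theorem OddsFormClass.succ_of_iff (h : OddsFormClass m χ c) (hsucc : χ (m + 1) = c ↔ Odd (m + 1)) :
    OddsFormClass (m + 1) χ c := by
  grind [OddsFormClass]

theorem OddsFormClass.apply_even_eq_succ (h : OddsFormClass m χ c) (hχ : IsGallaiSchurOn (m + 1) χ)
    (hm : Even m) (hne : χ (m + 1) ≠ c) {x : ℕ} (hx : x ∈ Finset.Icc 1 m) (hxe : Even x) :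
    χ x = χ (m + 1) := by
  have hx' := Finset.mem_Icc.1 hx
  have hodd : χ (m + 1 - x) = c := (h _ (by grind)).2 (by grind)
  have hxc : χ x ≠ c := by grind [h x hx]
  have hor : χ (m + 1) = χ x ∨ χ (m + 1) = χ (m + 1 - x) :=
    hχ.eq_or_eq_of_add_eq hx'.1 (by omega) (by omega) le_rfl (hodd ▸ hxc)
  exact (hor.resolve_right (hodd ▸ hne)).symm

theorem OddsFormClass.succ (h : OddsFormClass m χ (χ 1)) (hχ : IsGallaiSchurOn (m + 1) χ) :
    OddsFormClass (m + 1) χ (χ 1) ∨ m = 2 ∧ PentagonalClasses 3 χ (χ 1) (χ 2) := by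
  rcases Nat.even_or_odd m with he | ho
  · by_cases hc : χ (m + 1) = χ 1
    · exact .inl (h.succ_of_iff (by grind))
    · have heq : ∀ x ∈ Finset.Icc 1 m, Even x → χ x = χ (m + 1) :=
        fun x hx => h.apply_even_eq_succ hχ he hc hx
      have hlt : m < 4 := by
        by_contra! h4
        have h2 : χ 2 = χ (m + 1) := heq 2 (by grind) even_two
        have h4' : χ 4 = χ (m + 1) := heq 4 (by grind) (by decide)
        exact hχ.ne_of_add_eq (a := 2) (b := 2) one_le_two one_le_two rfl (by omega) h2 h2 h4'
      obtain rfl : m = 2 := by grind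
      have h23 : χ 2 = χ 3 := heq 2 (by grind) even_two
      exact .inr ⟨rfl, by grind, by grind, by grind⟩
  · have hmc : χ m = χ 1 := (h m (by grind)).2 ho
    have hne : χ (m + 1) ≠ χ 1 := hχ.ne_of_add_eq ho.pos le_rfl rfl le_rfl hmc rfl
    exact .inl (h.succ_of_iff (by grind))

namespace PentagonalClasses

theorem succ_ne_side (h : PentagonalClasses m χ c₁ c₂) (hχ : IsGallaiSchurOn (m + 1) χ)
    (hm : 3 ≤ m) (hres : ¬((m + 1) % 5 = 1 ∨ (m + 1) % 5 = 4)) : χ (m + 1) ≠ c₁ := by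
  -- `0 = 1 + 4`, `2 = 1 + 1` and `3 = 4 + 4` modulo `5`
  obtain ⟨a, b, ha, hb, hab, hares, hbres⟩ : ∃ a b, 1 ≤ a ∧ 1 ≤ b ∧ a + b = m + 1 ∧
      (a % 5 = 1 ∨ a % 5 = 4) ∧ (b % 5 = 1 ∨ b % 5 = 4) := by
    by_cases h3 : (m + 1) % 5 = 3
    · exact ⟨4, m - 3, by omega⟩
    · exact ⟨1, m, by omega⟩
  exact hχ.ne_of_add_eq ha hb hab le_rfl ((h.side_iff a (by grind)).2 hares)
    ((h.side_iff b (by grind)).2 hbres)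

theorem succ_ne_diagonal (h : PentagonalClasses m χ c₁ c₂) (hχ : IsGallaiSchurOn (m + 1) χ)
    (hm : 3 ≤ m) (hres : ¬((m + 1) % 5 = 2 ∨ (m + 1) % 5 = 3)) : χ (m + 1) ≠ c₂ := by
  -- `0 = 2 + 3`, `1 = 3 + 3` and `4 = 2 + 2` modulo `5`
  obtain ⟨a, b, ha, hb, hab, hares, hbres⟩ : ∃ a b, 1 ≤ a ∧ 1 ≤ b ∧ a + b = m + 1 ∧
      (a % 5 = 2 ∨ a % 5 = 3) ∧ (b % 5 = 2 ∨ b % 5 = 3) := by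
    by_cases h1 : (m + 1) % 5 = 1
    · exact ⟨3, m - 2, by omega⟩
    · exact ⟨2, m - 1, by omega⟩
  exact hχ.ne_of_add_eq ha hb hab le_rfl ((h.diagonal_iff a (by grind)).2 hares)
    ((h.diagonal_iff b (by grind)).2 hbres)

theorem succ_eq_side_or_eq_diagonal (h : PentagonalClasses m χ c₁ c₂)
    (hχ : IsGallaiSchurOn (m + 1) χ) (hm : 3 ≤ m) (hres : (m + 1) % 5 ≠ 0) :
    χ (m + 1) = c₁ ∨ χ (m + 1) = c₂ := by
  -- `1 = 4 + 2`, `2 = 4 + 3`, `3 = 1 + 2` and `4 = 1 + 3` modulo `5`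
  obtain ⟨a, b, ha, hb, hab, hares, hbres⟩ : ∃ a b, 1 ≤ a ∧ 1 ≤ b ∧ a + b = m + 1 ∧
      (a % 5 = 1 ∨ a % 5 = 4) ∧ (b % 5 = 2 ∨ b % 5 = 3) := by
    by_cases h12 : (m + 1) % 5 = 1 ∨ (m + 1) % 5 = 2
    · exact ⟨4, m - 3, by omega⟩
    · exact ⟨1, m, by omega⟩
  have hac : χ a = c₁ := (h.side_iff a (by grind)).2 hares
  have hbc : χ b = c₂ := (h.diagonal_iff b (by grind)).2 hbres
  simpa only [hac, hbc] using
    hχ.eq_or_eq_of_add_eq ha hb hab le_rfl (by rw [hac, hbc]; exact h.ne)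

theorem succ (h : PentagonalClasses m χ c₁ c₂) (hχ : IsGallaiSchurOn (m + 1) χ) (hm : 3 ≤ m) :
    PentagonalClasses (m + 1) χ c₁ c₂ := by
  have hside := h.succ_ne_side hχ hm
  have hdiag := h.succ_ne_diagonal hχ hm
  have hor := h.succ_eq_side_or_eq_diagonal hχ hm
  constructor <;> grind [PentagonalClasses]

theorem eq_side_or_eq_diagonal (h : PentagonalClasses m χ c₁ c₂) {x : ℕ} (hx : x ∈ Finset.Icc 1 m)
    (hdvd : ¬5 ∣ x) : χ x = c₁ ∨ χ x = c₂ := by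
  rw [h.side_iff x hx, h.diagonal_iff x hx]
  omega

theorem apply_eq_of_mod_eq (h : PentagonalClasses m χ c₁ c₂) {x y : ℕ} (hx : x ∈ Finset.Icc 1 m)
    (hy : y ∈ Finset.Icc 1 m) (hdvd : ¬5 ∣ x) (hxy : x % 5 = y % 5 ∨ 5 ∣ x + y) : χ x = χ y := by
  rcases h.eq_side_or_eq_diagonal hx hdvd with hc | hc
  · have := (h.side_iff x hx).1 hc
    exact hc.trans ((h.side_iff y hy).2 (by omega)).symm
  · have := (h.diagonal_iff x hx).1 hc
    exact hc.trans ((h.diagonal_iff y hy).2 (by omega)).symm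

theorem not_monochromatic (h : PentagonalClasses m χ c₁ c₂) {a b : ℕ} (ha : 1 ≤ a) (hb : 1 ≤ b)
    (hab : a + b ≤ m) (hdvd : ¬(5 ∣ a ∧ 5 ∣ b)) : ¬(χ a = χ b ∧ χ b = χ (a + b)) := by
  have ha' : a ∈ Finset.Icc 1 m := by grind
  have hb' : b ∈ Finset.Icc 1 m := by grind
  have hab' : a + b ∈ Finset.Icc 1 m := by grind
  rintro ⟨hχa, hχb⟩
  have hcolor : χ b = c₁ ∨ χ b = c₂ := by
    by_cases hb5 : 5 ∣ b
    · exact hχa ▸ h.eq_side_or_eq_diagonal ha' (by tauto)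
    · exact h.eq_side_or_eq_diagonal hb' hb5
  rcases hcolor with hc | hc
  · have hares := (h.side_iff a ha').1 (hχa.trans hc)
    have hbres := (h.side_iff b hb').1 hc
    have habres := (h.side_iff _ hab').1 (hχb.symm.trans hc)
    omega
  · have hares := (h.diagonal_iff a ha').1 (hχa.trans hc)
    have hbres := (h.diagonal_iff b hb').1 hc
    have habres := (h.diagonal_iff _ hab').1 (hχb.symm.trans hc)
    omega

theorem not_rainbow (h : PentagonalClasses m χ c₁ c₂) {a b : ℕ} (ha : 1 ≤ a) (hb : 1 ≤ b)
    (hab : a + b ≤ m) (hdvd : ¬(5 ∣ a ∧ 5 ∣ b)) :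
    ¬(χ a ≠ χ b ∧ χ a ≠ χ (a + b) ∧ χ b ≠ χ (a + b)) := by
  have ha' : a ∈ Finset.Icc 1 m := by grind
  have hb' : b ∈ Finset.Icc 1 m := by grind
  have hab' : a + b ∈ Finset.Icc 1 m := by grind
  rintro ⟨hχab, hχa, hχb⟩
  have ha5 : ¬5 ∣ a := fun _ => hχb (h.apply_eq_of_mod_eq hb' hab' (by tauto) (by omega))
  have hb5 : ¬5 ∣ b := fun _ => hχa (h.apply_eq_of_mod_eq ha' hab' ha5 (by omega))
  have hab5 : ¬5 ∣ a + b := fun hs => hχab (h.apply_eq_of_mod_eq ha' hb' ha5 (.inr hs))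
  have hca := h.eq_side_or_eq_diagonal ha' ha5
  have hcb := h.eq_side_or_eq_diagonal hb' hb5
  have hcab := h.eq_side_or_eq_diagonal hab' hab5
  grind

theorem isGallaiSchurOn (h : PentagonalClasses m χ c₁ c₂)
    (h5 : IsGallaiSchurOn (m / 5) (fun x => χ (5 * x))) : IsGallaiSchurOn m χ where
  not_monochromatic a b ha hb hab := by
    by_cases hdvd : 5 ∣ a ∧ 5 ∣ b
    · obtain ⟨⟨a, rfl⟩, ⟨b, rfl⟩⟩ := hdvd
      simpa only [mul_add] using
        h5.not_monochromatic (a := a) (b := b) (by omega) (by omega) (by omega)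
    · exact h.not_monochromatic ha hb hab hdvd
  not_rainbow a b ha hb hab := by
    by_cases hdvd : 5 ∣ a ∧ 5 ∣ b
    · obtain ⟨⟨a, rfl⟩, ⟨b, rfl⟩⟩ := hdvd
      simpa only [mul_add] using h5.not_rainbow (a := a) (b := b) (by omega) (by omega) (by omega)
    · exact h.not_rainbow ha hb hab hdvd

theorem not_oddsFormClass (h : PentagonalClasses m χ c₁ c₂) (hm : 4 ≤ m) :
    ¬OddsFormClass m χ c := by
  intro hodd
  have h14 : χ 1 = χ 4 :=
    ((h.side_iff 1 (by grind)).2 (by decide)).trans ((h.side_iff 4 (by grind)).2 (by decide)).symm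
  have h1 : χ 1 = c := (hodd 1 (by grind)).2 odd_one
  exact absurd ((hodd 4 (by grind)).1 (h14.symm.trans h1)) (by decide)

end PentagonalClasses

theorem IsGallaiSchurOn.oddsFormClass_or_pentagonalClasses (hχ : IsGallaiSchurOn m χ) (hm : 1 ≤ m) :
    OddsFormClass m χ (χ 1) ∨ 3 ≤ m ∧ PentagonalClasses m χ (χ 1) (χ 2) := by
  induction m, hm using Nat.le_induction with
  | base => exact .inl (by grind [OddsFormClass])
  | succ m hm ih =>
    rcases ih (hχ.mono m.le_succ) with hodd | ⟨h3, hpent⟩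
    · rcases hodd.succ hχ with hodd' | ⟨rfl, hpent⟩
      · exact .inl hodd'
      · exact .inr ⟨le_rfl, hpent⟩
    · exact .inr ⟨h3.trans m.le_succ, hpent.succ hχ h3⟩

end Coloring

section Lift

variable {α : Type*} {m : ℕ} {χ : ℕ → α} {c₁ c₂ : α}

/-- The coloring of `[1, 5 * m + 4]` that copies a coloring `χ` of `[1, m]` onto the multiples of
`5` and gives the colors `c₁` and `c₂` to the residues `±1` and `±2` modulo `5`. -/
def pentagonalLift (χ : ℕ → α) (c₁ c₂ : α) (x : ℕ) : α :=
  if 5 ∣ x then χ (x / 5) else if x % 5 = 1 ∨ x % 5 = 4 then c₁ else c₂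

@[simp]
theorem pentagonalLift_five_mul (x : ℕ) : pentagonalLift χ c₁ c₂ (5 * x) = χ x := by
  simp [pentagonalLift]

theorem pentagonalClasses_pentagonalLift (h₁ : ∀ x ∈ Finset.Icc 1 m, χ x ≠ c₁)
    (h₂ : ∀ x ∈ Finset.Icc 1 m, χ x ≠ c₂) (hne : c₁ ≠ c₂) :
    PentagonalClasses (5 * m + 4) (pentagonalLift χ c₁ c₂) c₁ c₂ := by
  constructor <;> grind [pentagonalLift]

theorem image_pentagonalLift [DecidableEq α] :
    (Finset.Icc 1 (5 * m + 4)).image (pentagonalLift χ c₁ c₂) =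
      insert c₁ (insert c₂ ((Finset.Icc 1 m).image χ)) := by
  apply Finset.Subset.antisymm
  · grind [pentagonalLift]
  · have h1 : pentagonalLift χ c₁ c₂ 1 = c₁ := by simp [pentagonalLift]
    have h2 : pentagonalLift χ c₁ c₂ 2 = c₂ := by simp [pentagonalLift]
    have h5 := pentagonalLift_five_mul (χ := χ) (c₁ := c₁) (c₂ := c₂)
    grind

end Lift

/-- One more than the length `m` of the longest interval `[1, m]` with a strong Gallai–Schur
coloring by `r` colors. With this shift each pair of colors contributes a factor `5`, and an
unpaired color a factor `2`. -/
def gallaiSchurOrder (r : ℕ) : ℕ :=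
  5 ^ (r / 2) * 2 ^ (r % 2)

theorem gallaiSchurOrder_pos (r : ℕ) : 0 < gallaiSchurOrder r := by
  unfold gallaiSchurOrder
  positivity

theorem gallaiSchurOrder_add_two (r : ℕ) : gallaiSchurOrder (r + 2) = 5 * gallaiSchurOrder r := by
  simp only [gallaiSchurOrder, Nat.add_div_right r two_pos, Nat.add_mod_right, pow_succ]
  ring

theorem two_mul_gallaiSchurOrder_le (r : ℕ) :
    2 * gallaiSchurOrder r ≤ gallaiSchurOrder (r + 1) := by
  induction r using Nat.twoStepInduction with
  | zero => decide
  | one => decide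
  | more r ih _ =>
    rw [gallaiSchurOrder_add_two, show r + 2 + 1 = r + 1 + 2 from rfl, gallaiSchurOrder_add_two]
    linarith

theorem strongGS_iff {m : ℕ} {C : Finset ℕ} {χ : ℕ → ℕ} :
    StrongGS m C χ ↔ (Finset.Icc 1 m).image χ = C ∧ IsGallaiSchurOn m χ := by
  constructor
  · rintro ⟨hmem, hsurj, hmono, hrain⟩
    exact ⟨by grind, fun a b ha hb hab => hmono a (by grind) b (by grind) _ (by grind) rfl,
      fun a b ha hb hab => hrain a (by grind) b (by grind) _ (by grind) rfl⟩
  · rintro ⟨rfl, hχ⟩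
    refine ⟨by grind, by grind, ?_, ?_⟩
    · rintro a ha b hb _ hc rfl
      exact hχ.not_monochromatic (by grind) (by grind) (by grind)
    · rintro a ha b hb _ hc rfl
      exact hχ.not_rainbow (by grind) (by grind) (by grind)

namespace StrongGS

variable {m : ℕ} {C : Finset ℕ} {χ : ℕ → ℕ} {c c₁ c₂ : ℕ}

theorem isGallaiSchurOn (h : StrongGS m C χ) : IsGallaiSchurOn m χ :=
  (strongGS_iff.1 h).2

theorem one_le_of_nonempty (h : StrongGS m C χ) (hC : C.Nonempty) : 1 ≤ m := by
  obtain ⟨x, hx, -⟩ := h.2.1 _ hC.choose_spec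
  grind

theorem oddsFormClass_or_pentagonalClasses (h : StrongGS m C χ) (hm : 1 ≤ m) :
    (∃ c ∈ C, OddsFormClass m χ c) ∨ ∃ c₁ ∈ C, ∃ c₂ ∈ C, PentagonalClasses m χ c₁ c₂ := by
  rcases h.isGallaiSchurOn.oddsFormClass_or_pentagonalClasses hm with hodd | ⟨h3, hpent⟩
  · exact .inl ⟨χ 1, h.1 1 (by grind), hodd⟩
  · exact .inr ⟨χ 1, h.1 1 (by grind), χ 2, h.1 2 (by grind), hpent⟩

theorem comp_mul (h : StrongGS m C χ) {d : ℕ} (hd : 0 < d) {D : Finset ℕ} (hDC : D ⊆ C)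
    (hD : ∀ x ∈ Finset.Icc 1 m, (χ x ∈ D ↔ d ∣ x)) :
    StrongGS (m / d) D (fun x => χ (d * x)) := by
  have hmul {x : ℕ} : d * x ∈ Finset.Icc 1 m ↔ x ∈ Finset.Icc 1 (m / d) := by
    simp only [Finset.mem_Icc, Nat.le_div_iff_mul_le hd, mul_comm x d, Nat.one_le_iff_ne_zero,
      mul_ne_zero_iff, hd.ne', ne_eq, not_false_eq_true, true_and]
  refine strongGS_iff.2 ⟨Finset.Subset.antisymm ?_ fun i hi => ?_, h.isGallaiSchurOn.comp_mul hd⟩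
  · exact Finset.image_subset_iff.2 fun x hx => (hD _ (hmul.2 hx)).2 (dvd_mul_right d x)
  · obtain ⟨x, hx, rfl⟩ := h.2.1 i (hDC hi)
    obtain ⟨y, rfl⟩ := (hD x hx).1 hi
    exact Finset.mem_image.2 ⟨y, hmul.1 hx, rfl⟩

theorem comp_two_mul (h : StrongGS m C χ) (hodd : OddsFormClass m χ c) :
    StrongGS (m / 2) (C \ {c}) (fun x => χ (2 * x)) :=
  h.comp_mul two_pos Finset.sdiff_subset fun x hx => by
    rw [Finset.mem_sdiff, Finset.mem_singleton, hodd x hx, Nat.not_odd_iff_even, even_iff_two_dvd,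
      and_iff_right (h.1 x hx)]

theorem comp_five_mul (h : StrongGS m C χ) (hpent : PentagonalClasses m χ c₁ c₂) :
    StrongGS (m / 5) (C \ {c₁, c₂}) (fun x => χ (5 * x)) :=
  h.comp_mul (by norm_num) Finset.sdiff_subset fun x hx => by
    rw [Finset.mem_sdiff, Finset.mem_insert, Finset.mem_singleton, hpent.side_iff x hx,
      hpent.diagonal_iff x hx, and_iff_right (h.1 x hx)]
    omega

protected theorem pentagonalLift (h : StrongGS m C χ) (h₁ : c₁ ∉ C) (h₂ : c₂ ∉ C) (hne : c₁ ≠ c₂) :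
    StrongGS (5 * m + 4) (insert c₁ (insert c₂ C)) (pentagonalLift χ c₁ c₂) := by
  obtain ⟨rfl, hχ⟩ := strongGS_iff.1 h
  refine strongGS_iff.2 ⟨image_pentagonalLift, ?_⟩
  refine (pentagonalClasses_pentagonalLift (m := m) (by grind) (by grind) hne).isGallaiSchurOn ?_
  simpa only [pentagonalLift_five_mul, show (5 * m + 4) / 5 = m by omega] using hχ

end StrongGS

theorem two_mul_gallaiSchurOrder_card_sdiff_le {C : Finset ℕ} {c : ℕ} (hc : c ∈ C) :
    2 * gallaiSchurOrder (C \ {c}).card ≤ gallaiSchurOrder C.card := by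
  rw [Finset.sdiff_singleton_eq_erase, ← Finset.card_erase_add_one hc]
  exact two_mul_gallaiSchurOrder_le _

theorem five_mul_gallaiSchurOrder_card_sdiff {C : Finset ℕ} {c₁ c₂ : ℕ} (h₁ : c₁ ∈ C)
    (h₂ : c₂ ∈ C) (hne : c₁ ≠ c₂) :
    5 * gallaiSchurOrder (C \ {c₁, c₂}).card = gallaiSchurOrder C.card := by
  have hsub : {c₁, c₂} ⊆ C := Finset.insert_subset h₁ (Finset.singleton_subset_iff.2 h₂)
  rw [← Finset.card_sdiff_add_card_eq_card hsub, Finset.card_pair hne, gallaiSchurOrder_add_two]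

theorem StrongGS.add_one_le_gallaiSchurOrder {m : ℕ} {C : Finset ℕ} {χ : ℕ → ℕ}
    (h : StrongGS m C χ) : m + 1 ≤ gallaiSchurOrder C.card := by
  induction m using Nat.strong_induction_on generalizing C χ with
  | _ m ih =>
    rcases m.eq_zero_or_pos with rfl | hm
    · exact gallaiSchurOrder_pos _
    rcases h.oddsFormClass_or_pentagonalClasses hm with
      ⟨c, hc, hodd⟩ | ⟨c₁, h₁, c₂, h₂, hpent⟩
    · calc m + 1 ≤ 2 * (m / 2 + 1) := Nat.lt_mul_div_succ m two_pos
        _ ≤ 2 * gallaiSchurOrder (C \ {c}).card := by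
          gcongr; exact ih _ (by omega) (h.comp_two_mul hodd)
        _ ≤ gallaiSchurOrder C.card := two_mul_gallaiSchurOrder_card_sdiff_le hc
    · calc m + 1 ≤ 5 * (m / 5 + 1) := Nat.lt_mul_div_succ m (by norm_num)
        _ ≤ 5 * gallaiSchurOrder (C \ {c₁, c₂}).card := by
          gcongr; exact ih _ (by omega) (h.comp_five_mul hpent)
        _ = gallaiSchurOrder C.card := five_mul_gallaiSchurOrder_card_sdiff h₁ h₂ hpent.ne

theorem exists_strongGS (C : Finset ℕ) :
    ∃ m χ, m + 1 = gallaiSchurOrder C.card ∧ StrongGS m C χ := by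
  induction hr : C.card using Nat.twoStepInduction generalizing C with
  | zero =>
    obtain rfl := Finset.card_eq_zero.1 hr
    exact ⟨0, id, rfl, by simp [StrongGS]⟩
  | one =>
    obtain ⟨c, rfl⟩ := Finset.card_eq_one.1 hr
    exact ⟨1, fun _ => c, rfl, by simp [StrongGS]⟩
  | more r ih _ =>
    obtain ⟨c₁, C', h₁, rfl, hr'⟩ := Finset.card_eq_succ.1 hr
    obtain ⟨c₂, D, h₂, rfl, hD⟩ := Finset.card_eq_succ.1 hr'
    obtain ⟨m, χ, hm, hχ⟩ := ih D hD
    refine ⟨5 * m + 4, pentagonalLift χ c₁ c₂, ?_, hχ.pentagonalLift (by grind) h₂ (by grind)⟩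
    rw [gallaiSchurOrder_add_two]
    omega

namespace StrongGS

variable {m : ℕ} {C : Finset ℕ} {χ : ℕ → ℕ} {c c₁ c₂ : ℕ}

theorem gallaiSchurOrder_le_of_maximal (hmax : ∀ m', m < m' → ∀ χ' : ℕ → ℕ, ¬StrongGS m' C χ') :
    gallaiSchurOrder C.card ≤ m + 1 := by
  obtain ⟨n, χ', hn, hχ'⟩ := exists_strongGS C
  have : n ≤ m := not_lt.1 fun hlt => hmax n hlt χ' hχ'
  omega

theorem odd_of_oddsFormClass (h : StrongGS m C χ) (hlen : gallaiSchurOrder C.card ≤ m + 1)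
    (hc : c ∈ C) (hodd : OddsFormClass m χ c) : Odd m := by
  have hle : 2 * (m / 2 + 1) ≤ m + 1 :=
    calc 2 * (m / 2 + 1) ≤ 2 * gallaiSchurOrder (C \ {c}).card := by
          gcongr; exact (h.comp_two_mul hodd).add_one_le_gallaiSchurOrder
      _ ≤ gallaiSchurOrder C.card := two_mul_gallaiSchurOrder_card_sdiff_le hc
      _ ≤ m + 1 := hlen
  exact Nat.odd_iff.2 (by omega)

theorem mod_five_eq_four_of_pentagonalClasses (h : StrongGS m C χ)
    (hlen : gallaiSchurOrder C.card ≤ m + 1) (h₁ : c₁ ∈ C) (h₂ : c₂ ∈ C)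
    (hpent : PentagonalClasses m χ c₁ c₂) : m % 5 = 4 := by
  have hle : 5 * (m / 5 + 1) ≤ m + 1 :=
    calc 5 * (m / 5 + 1) ≤ 5 * gallaiSchurOrder (C \ {c₁, c₂}).card := by
          gcongr; exact (h.comp_five_mul hpent).add_one_le_gallaiSchurOrder
      _ = gallaiSchurOrder C.card := five_mul_gallaiSchurOrder_card_sdiff h₁ h₂ hpent.ne
      _ ≤ m + 1 := hlen
  omega

end StrongGS

theorem strong_maximal_structure_general {m : ℕ} {C : Finset ℕ} (hC : C.Nonempty) {χ : ℕ → ℕ}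
    (h : StrongGS m C χ) (hmax : ∀ m', m < m' → ∀ χ' : ℕ → ℕ, ¬StrongGS m' C χ') :
    Xor
      (m % 5 = 4 ∧
        ∃ c₁ ∈ C, ∃ c₂ ∈ C, c₁ ≠ c₂ ∧
          (∀ x ∈ Finset.Icc 1 m, (χ x = c₁ ↔ (x % 5 = 1 ∨ x % 5 = 4))) ∧
          (∀ x ∈ Finset.Icc 1 m, (χ x = c₂ ↔ (x % 5 = 2 ∨ x % 5 = 3))) ∧
          (∀ x ∈ Finset.Icc 1 m, 5 ∣ x → χ x ≠ c₁ ∧ χ x ≠ c₂) ∧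
          StrongGS ((m - 4) / 5) (C \ {c₁, c₂}) (fun x => χ (5 * x)))
      (Odd m ∧
        ∃ c₁ ∈ C,
          (∀ x ∈ Finset.Icc 1 m, (χ x = c₁ ↔ Odd x)) ∧
          (∀ x ∈ Finset.Icc 1 m, Even x → χ x ≠ c₁) ∧
          StrongGS ((m - 1) / 2) (C \ {c₁}) (fun x => χ (2 * x))) := by
  have horder := StrongGS.gallaiSchurOrder_le_of_maximal hmax
  refine (xor_iff_or_and_not_and _ _).2 ⟨?_, ?_⟩
  · rcases h.oddsFormClass_or_pentagonalClasses (h.one_le_of_nonempty hC) with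
      ⟨c, hc, hodd⟩ | ⟨c₁, h₁, c₂, h₂, hpent⟩
    · have hm := h.odd_of_oddsFormClass horder hc hodd
      have hdiv : (m - 1) / 2 = m / 2 := by grind
      exact .inr ⟨hm, c, hc, hodd, by grind [OddsFormClass], hdiv ▸ h.comp_two_mul hodd⟩
    · have hm := h.mod_five_eq_four_of_pentagonalClasses horder h₁ h₂ hpent
      have hdiv : (m - 4) / 5 = m / 5 := by omega
      exact .inl ⟨hm, c₁, h₁, c₂, h₂, hpent.ne, hpent.side_iff, hpent.diagonal_iff,
        by grind [PentagonalClasses], hdiv ▸ h.comp_five_mul hpent⟩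
  · rintro ⟨⟨hm, c₁, -, c₂, -, hne, hside, hdiag, -⟩, -, c, -, hodd, -⟩
    exact PentagonalClasses.not_oddsFormClass ⟨hne, hside, hdiag⟩ (by omega) hodd

/-- **Structure of maximal strong Gallai–Schur colorings.** Let `r > 3` and let
`χ` be a strong Gallai–Schur `r`-coloring of `[1, m]` that is maximal (no such
coloring of any longer interval exists).  Then exactly one of the following holds:
(a) `m ≡ 4 (mod 5)`, the residues `1, 4` mod `5` form one color class, the
residues `2, 3` mod `5` form another, multiples of `5` get the remaining `r - 2`
colors, and `x ↦ χ (5 * x)` is a strong Gallai–Schur coloring of `[1, (m-4)/5]`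
with those `r - 2` colors; or
(b) `m` is odd, the odd numbers form one color class, even numbers get the
remaining `r - 1` colors, and `x ↦ χ (2 * x)` is a strong Gallai–Schur coloring
of `[1, (m-1)/2]` with those `r - 1` colors. -/
theorem strong_maximal_structure (m r : ℕ) (hr : 3 < r) (χ : ℕ → ℕ)
    (h : StrongGS m (Finset.Icc 1 r) χ)
    (hmax : ∀ m', m < m' → ∀ χ' : ℕ → ℕ, ¬ StrongGS m' (Finset.Icc 1 r) χ') :
    Xor'
      (m % 5 = 4 ∧
        ∃ c₁ ∈ Finset.Icc 1 r, ∃ c₂ ∈ Finset.Icc 1 r, c₁ ≠ c₂ ∧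
          (∀ x ∈ Finset.Icc 1 m, (χ x = c₁ ↔ (x % 5 = 1 ∨ x % 5 = 4))) ∧
          (∀ x ∈ Finset.Icc 1 m, (χ x = c₂ ↔ (x % 5 = 2 ∨ x % 5 = 3))) ∧
          (∀ x ∈ Finset.Icc 1 m, 5 ∣ x → χ x ≠ c₁ ∧ χ x ≠ c₂) ∧
          StrongGS ((m - 4) / 5) (Finset.Icc 1 r \ {c₁, c₂}) (fun x => χ (5 * x)))
      (Odd m ∧
        ∃ c₁ ∈ Finset.Icc 1 r,
          (∀ x ∈ Finset.Icc 1 m, (χ x = c₁ ↔ Odd x)) ∧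
          (∀ x ∈ Finset.Icc 1 m, Even x → χ x ≠ c₁) ∧
          StrongGS ((m - 1) / 2) (Finset.Icc 1 r \ {c₁}) (fun x => χ (2 * x))) :=
  strong_maximal_structure_general (Finset.nonempty_Icc.2 (by omega)) h hmax
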